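/- Let m ≥ 2 be an integer. For τ ∈ ℍ and u, v, w ∈ ℂ with u−v ∉ Λ_τ, u−w ∉ Λ_τ and v−w ∉ Λ_τ, define φ(u,v,w;τ) = 2πi·∂_τ℘_m(u−v;τ) + m·G₂(τ)·℘_m(u−v;τ) − m·G₂(τ)·(u−v)·℘_{m+1}(u−v;τ) + m·℘_{m+1}(u−v;τ)·( ℘₁(u−w;τ) − ℘₁(v−w;τ) ), where ∂_τ℘_m(z;τ) denotes the complex derivative of the function τ ↦ ℘_m(z;τ) at fixed z. Then φ is elliptic in each of the variables u, v, w: for all (k,l) ∈ ℤ² (whenever the shifted arguments still satisfy the lattice conditions), φ(u+kτ+l, v, w; τ) = φ(u,v,w;τ), φ(u, v+kτ+l, w; τ) = φ(u,v,w;τ), and φ(u, v, w+kτ+l; τ) = φ(u,v,w;τ). -/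

import Mathlib

open Complex Real

/-- The lattice point `kτ + l` associated to `p = (k, l) ∈ ℤ²`. -/
noncomputable def latticePt (τ : ℂ) (p : ℤ × ℤ) : ℂ := (p.1 : ℂ) * τ + (p.2 : ℂ)

/-- The Weierstrass function `℘₁(z;τ)`. -/
noncomputable def wp1 (z τ : ℂ) : ℂ :=
  1 / z + ∑' p : {p : ℤ × ℤ // p ≠ (0, 0)},
    (1 / (z - latticePt τ p.1) + 1 / latticePt τ p.1 + z / (latticePt τ p.1) ^ 2)

/-- The Weierstrass function `℘₂(z;τ)`. -/
noncomputable def wp2 (z τ : ℂ) : ℂ :=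
  1 / z ^ 2 + ∑' p : {p : ℤ × ℤ // p ≠ (0, 0)},
    (1 / (z - latticePt τ p.1) ^ 2 - 1 / (latticePt τ p.1) ^ 2)

/-- The Weierstrass function `℘_m(z;τ)` for `m ≥ 3`. -/
noncomputable def wpHigh (m : ℕ) (z τ : ℂ) : ℂ :=
  ∑' p : ℤ × ℤ, 1 / (z - latticePt τ p) ^ m

/-- The Weierstrass function `℘_m(z;τ)`, `m ≥ 1`. -/
noncomputable def wp (m : ℕ) (z τ : ℂ) : ℂ :=
  if m = 1 then wp1 z τ else if m = 2 then wp2 z τ else wpHigh m z τ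

/-- The Eisenstein series `G_k(τ) = Σ_{(m,l) ≠ (0,0)} (mτ+l)^{-k}` (used for `k ≥ 3`). -/
noncomputable def Eis (k : ℕ) (τ : ℂ) : ℂ :=
  ∑' p : {p : ℤ × ℤ // p ≠ (0, 0)}, 1 / (latticePt τ p.1) ^ k

/-- The quasimodular Eisenstein series
`G₂(τ) = π²/3 + Σ_{m≠0} Σ_{l∈ℤ} (mτ+l)^{-2}` (iterated sum). -/
noncomputable def G2 (τ : ℂ) : ℂ :=
  (Real.pi : ℂ) ^ 2 / 3 +
    ∑' m : {m : ℤ // m ≠ 0}, ∑' l : ℤ, 1 / (((m : ℤ) : ℂ) * τ + (l : ℂ)) ^ 2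

/-- The function `φ(u,v,w;τ) = 2πi·∂_τ℘_m(u−v;τ) + m·G₂(τ)·℘_m(u−v;τ)
− m·G₂(τ)·(u−v)·℘_{m+1}(u−v;τ) + m·℘_{m+1}(u−v;τ)·(℘₁(u−w;τ) − ℘₁(v−w;τ))`. -/
noncomputable def phiTheta (m : ℕ) (u v w τ : ℂ) : ℂ :=
  2 * Real.pi * Complex.I * deriv (fun s => wp m (u - v) s) τ +
    (m : ℂ) * G2 τ * wp m (u - v) τ -
    (m : ℂ) * G2 τ * (u - v) * wp (m + 1) (u - v) τ +
    (m : ℂ) * wp (m + 1) (u - v) τ * (wp1 (u - w) τ - wp1 (v - w) τ)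

/-! For `m ≥ 2` the function `℘_m` is `Λ_τ`-periodic, but the period `kτ + l` moves with `τ`, so the
chain rule gives `∂_τ℘_m(z + kτ + l) = ∂_τ℘_m(z) + m k ℘_{m+1}(z)`. On the other hand
`℘₁(z + kτ + l) = ℘₁(z) + (kτ + l) G₂ − 2πi k`: summed along the row of lattice points with fixed
`τ`-coefficient, the simple poles of `℘₁` add up to cotangents, the convergence factors to the rows
of `G₂`, and the sum of cotangent differences telescopes to the jump of `π cot` between `−i∞` and
`+i∞`. In `φ` the defects `2πi m k ℘_{m+1}` and `m (kτ + l) G₂ ℘_{m+1}` cancel. -/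

open Asymptotics Filter Topology

section Lattice

lemma latticePt_zero (τ : ℂ) : latticePt τ 0 = 0 := by simp [latticePt]

lemma latticePt_add (τ : ℂ) (p q : ℤ × ℤ) :
    latticePt τ (p + q) = latticePt τ p + latticePt τ q := by
  simp only [latticePt, Prod.fst_add, Prod.snd_add]
  push_cast
  ring

lemma latticePt_neg (τ : ℂ) (p : ℤ × ℤ) : latticePt τ (-p) = -latticePt τ p := by
  simp only [latticePt, Prod.fst_neg, Prod.snd_neg]
  push_cast
  ring

lemma hasDerivAt_latticePt (τ : ℂ) (p : ℤ × ℤ) :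
    HasDerivAt (fun s => latticePt s p) p.1 τ := by
  simpa [latticePt] using ((hasDerivAt_id τ).const_mul (p.1 : ℂ)).add_const (p.2 : ℂ)

variable {τ z : ℂ}

lemma add_latticePt_ne_latticePt (hz : ∀ p, z ≠ latticePt τ p) (q p : ℤ × ℤ) :
    z + latticePt τ q ≠ latticePt τ p := by
  rw [← sub_add_cancel p q, latticePt_add]
  exact fun h => hz (p - q) (add_right_cancel h)

lemma exists_mul_norm_le_norm_latticePt (hτ : 0 < τ.im) :
    ∃ c > 0, ∀ p : ℤ × ℤ, c * ‖p‖ ≤ ‖latticePt τ p‖ := by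
  refine ⟨EisensteinSeries.r ⟨τ, hτ⟩, EisensteinSeries.r_pos _, fun p => ?_⟩
  rcases eq_or_ne p 0 with rfl | hp
  · simp [latticePt_zero]
  · have hp' : ![p.1, p.2] ≠ 0 := by simpa [Prod.ext_iff] using hp
    have h := EisensteinSeries.r_mul_max_le ⟨τ, hτ⟩ hp'
    rw [EisensteinSeries.norm_eq_max_natAbs] at h
    simpa [latticePt, Prod.norm_def, Int.norm_eq_abs] using h

lemma latticePt_ne_zero (hτ : 0 < τ.im) {p : ℤ × ℤ} (hp : p ≠ 0) : latticePt τ p ≠ 0 := by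
  obtain ⟨c, hc, h⟩ := exists_mul_norm_le_norm_latticePt hτ
  exact norm_pos_iff.1 ((mul_pos hc (norm_pos_iff.2 hp)).trans_le (h p))

lemma isBigO_one_add_norm_sub_latticePt (hτ : 0 < τ.im) (z : ℂ) :
    (fun p : ℤ × ℤ => 1 + ‖p‖) =O[cofinite] fun p => latticePt τ p - z := by
  obtain ⟨c, hc, h⟩ := exists_mul_norm_le_norm_latticePt hτ
  have hnorm : (fun p : ℤ × ℤ => ‖p‖) =O[cofinite] latticePt τ :=
    .of_bound c⁻¹ <| .of_forall fun p => by
      rw [norm_norm, inv_mul_eq_div, le_div_iff₀' hc]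
      exact h p
  have hatTop : Tendsto (fun p => ‖latticePt τ p‖) cofinite atTop :=
    tendsto_atTop_mono h <| .const_mul_atTop hc <|
      tendsto_norm_comp_cofinite_atTop_of_isClosedEmbedding IsClosedEmbedding.id
  have hone : (fun _ : ℤ × ℤ => (1 : ℝ)) =O[cofinite] latticePt τ :=
    (isLittleO_const_left.2 (.inr hatTop)).isBigO
  have hsub : latticePt τ =O[cofinite] fun p => latticePt τ p - z :=
    (isLittleO_const_left.2 (.inr hatTop)).right_isBigO_sub
  exact (hone.add hnorm).trans hsub

lemma exists_norm_inv_sub_latticePt_le (hτ : 0 < τ.im) (z : ℂ) :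
    ∃ C > 0, ∀ᶠ x : ℂ × ℂ in 𝓝 (z, τ), ∀ p : ℤ × ℤ, z ≠ latticePt τ p →
      x.1 ≠ latticePt x.2 p ∧ ‖(x.1 - latticePt x.2 p)⁻¹‖ ≤ C * (1 + ‖p‖)⁻¹ := by
  obtain ⟨C, hC, h⟩ := bound_of_isBigO_cofinite (isBigO_one_add_norm_sub_latticePt hτ z)
  refine ⟨2 * C, by positivity, ?_⟩
  filter_upwards [Metric.ball_mem_nhds (z, τ) (show 0 < (2 * C)⁻¹ by positivity)] with x hx p hp
  rw [mem_ball_iff_norm, Prod.norm_def, max_lt_iff] at hx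
  have hlower := h (sub_ne_zero.2 hp.symm)
  rw [Real.norm_of_nonneg (by positivity), norm_sub_rev] at hlower
  have hdist : ‖(z - latticePt τ p) - (x.1 - latticePt x.2 p)‖ ≤ (2 * C)⁻¹ * (1 + ‖p‖) := by
    calc ‖(z - latticePt τ p) - (x.1 - latticePt x.2 p)‖
        = ‖-(x.1 - z) + p.1 * (x.2 - τ)‖ := by
          congr 1
          simp only [latticePt]
          ring
      _ ≤ ‖x.1 - z‖ + ‖(p.1 : ℂ)‖ * ‖x.2 - τ‖ := by
          simpa only [norm_neg, norm_mul] using norm_add_le (-(x.1 - z)) (p.1 * (x.2 - τ))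
      _ ≤ (2 * C)⁻¹ + ‖p‖ * (2 * C)⁻¹ := by
          gcongr
          · exact hx.1.le
          · simpa [Int.norm_eq_abs] using norm_fst_le p
          · exact hx.2.le
      _ = (2 * C)⁻¹ * (1 + ‖p‖) := by ring
  have hbound : 1 + ‖p‖ ≤ 2 * C * ‖x.1 - latticePt x.2 p‖ := by
    have htriangle := norm_sub_norm_le (z - latticePt τ p) (x.1 - latticePt x.2 p)
    have hhalf : C * ((2 * C)⁻¹ * (1 + ‖p‖)) = (1 + ‖p‖) / 2 := by field_simp
    nlinarith
  have hpos : 0 < ‖x.1 - latticePt x.2 p‖ :=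
    pos_of_mul_pos_right ((by positivity : 0 < 1 + ‖p‖).trans_le hbound) (by positivity)
  refine ⟨sub_ne_zero.1 (norm_pos_iff.1 hpos), ?_⟩
  rwa [norm_inv, ← div_eq_mul_inv, le_div_iff₀ (by positivity), inv_mul_le_iff₀' hpos]

lemma summable_inv_one_add_norm_pow_three :
    Summable fun p : ℤ × ℤ => (1 + ‖p‖)⁻¹ ^ 3 := by
  have h := EisensteinSeries.summable_one_div_norm_rpow (k := 3) (by norm_num)
  rw [← (finTwoArrowEquiv ℤ).symm.summable_iff] at h
  refine h.of_norm_bounded_eventually ?_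
  filter_upwards [(Set.finite_singleton (0 : ℤ × ℤ)).compl_mem_cofinite] with p hp
  have hnorm : ‖(finTwoArrowEquiv ℤ).symm p‖ = ‖p‖ := by
    simp [EisensteinSeries.norm_eq_max_natAbs, Prod.norm_def, Int.norm_eq_abs]
  have hpos : 0 < ‖p‖ := norm_pos_iff.2 hp
  rw [Function.comp_apply, hnorm, Real.rpow_neg hpos.le, Real.norm_of_nonneg (by positivity),
    inv_pow]
  norm_cast
  gcongr
  exact le_add_of_nonneg_left zero_le_one

end Lattice

lemma add_tsum_subtype_ne {α β : Type*} [AddCommGroup α] [UniformSpace α]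
    [IsUniformAddGroup α] [CompleteSpace α] [T2Space α] {f : β → α} (hf : Summable f) (b : β) :
    f b + ∑' x : {x // x ≠ b}, f x = ∑' x, f x := by
  rw [← hf.tsum_subtype_add_tsum_subtype_compl {b}, tsum_singleton b f]
  rfl

lemma hasDerivAt_one_div_pow {𝕜 : Type*} [NontriviallyNormedField 𝕜] {f : 𝕜 → 𝕜} {f' x : 𝕜}
    (hf : HasDerivAt f f' x) (hx : f x ≠ 0) (n : ℕ) :
    HasDerivAt (fun s => 1 / f s ^ n) (-(n * f') * (1 / f x ^ (n + 1))) x := by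
  have h := (hasDerivAt_zpow (-n) (f x) (.inl hx)).comp x hf
  simp only [Function.comp_def, zpow_neg, zpow_natCast, ← one_div] at h
  refine h.congr_deriv ?_
  rw [← neg_add', zpow_neg, ← Nat.cast_add_one, zpow_natCast]
  push_cast
  ring

section Weierstrass

variable {τ z : ℂ} {m : ℕ}

/-- The period pair `(τ, 1)`, which ties `℘₂` to Mathlib's Weierstrass `℘`-function. -/
noncomputable def tauPeriodPair (τ : ℂ) (hτ : 0 < τ.im) : PeriodPair where
  ω₁ := τ
  ω₂ := 1
  indep := LinearIndependent.pair_iff.2 fun s t h => by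
    have him := congrArg Complex.im h
    have hre := congrArg Complex.re h
    simp only [real_smul, mul_one, add_im, im_ofReal_mul, ofReal_im, add_zero, zero_im,
      mul_eq_zero, hτ.ne', or_false] at him
    subst him
    simpa using hre

lemma tauPeriodPair_latticeEquivProd_symm (hτ : 0 < τ.im) (p : ℤ × ℤ) :
    ((tauPeriodPair τ hτ).latticeEquivProd.symm p : ℂ) = latticePt τ p := by
  rw [PeriodPair.latticeEquiv_symm_apply]
  simp [tauPeriodPair, latticePt]

lemma hasSum_weierstrassP_tauPeriodPair (hτ : 0 < τ.im) (z : ℂ) :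
    HasSum (fun p : ℤ × ℤ => 1 / (z - latticePt τ p) ^ 2 - 1 / latticePt τ p ^ 2)
      ((tauPeriodPair τ hτ).weierstrassP z) := by
  have h := (tauPeriodPair τ hτ).hasSum_weierstrassP z
  rw [← (tauPeriodPair τ hτ).latticeEquivProd.symm.toEquiv.hasSum_iff] at h
  simpa [Function.comp_def, tauPeriodPair_latticeEquivProd_symm hτ] using h

lemma wp2_eq_weierstrassP (hτ : 0 < τ.im) (z : ℂ) :
    wp2 z τ = (tauPeriodPair τ hτ).weierstrassP z := by
  have h := hasSum_weierstrassP_tauPeriodPair hτ z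
  rw [← h.tsum_eq, ← add_tsum_subtype_ne h.summable (0, 0), wp2]
  simp [latticePt]

lemma wp2_add_latticePt (hτ : 0 < τ.im) (z : ℂ) (q : ℤ × ℤ) :
    wp2 (z + latticePt τ q) τ = wp2 z τ := by
  rw [wp2_eq_weierstrassP hτ, wp2_eq_weierstrassP hτ, ← tauPeriodPair_latticeEquivProd_symm hτ,
    PeriodPair.weierstrassP_add_coe]

lemma wpHigh_add_latticePt (m : ℕ) (z τ : ℂ) (q : ℤ × ℤ) :
    wpHigh m (z + latticePt τ q) τ = wpHigh m z τ := by
  rw [wpHigh, wpHigh, ← (Equiv.addRight q).tsum_eq]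
  simp [latticePt_add]

lemma wp_add_latticePt (hm : 2 ≤ m) (hτ : 0 < τ.im) (z : ℂ) (q : ℤ × ℤ) :
    wp m (z + latticePt τ q) τ = wp m z τ := by
  simp only [wp, if_neg (by omega : m ≠ 1), wp2_add_latticePt hτ, wpHigh_add_latticePt]

/-- The summand at `p` of `℘_m(z;τ)`, `m ≥ 2`, when the series is written as a sum over all of
`ℤ²`; for `m = 2` the summand at the origin is right because `1 / 0 = 0`. -/
noncomputable def wpSummand (m : ℕ) (z τ : ℂ) (p : ℤ × ℤ) : ℂ :=
  1 / (z - latticePt τ p) ^ m - if m = 2 then 1 / latticePt τ p ^ 2 else 0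

lemma wp_eq_tsum_wpSummand (hm : 2 ≤ m) (hτ : 0 < τ.im) (z : ℂ) :
    wp m z τ = ∑' p, wpSummand m z τ p := by
  rw [wp, if_neg (by omega)]
  split_ifs with h
  · rw [wp2_eq_weierstrassP hτ, ← (hasSum_weierstrassP_tauPeriodPair hτ z).tsum_eq]
    simp only [wpSummand, h, if_true]
  · simp only [wpSummand, wpHigh, h, if_false, sub_zero]

lemma norm_one_div_sub_sq_sub_one_div_sq_le {𝕜 : Type*} [NormedField 𝕜] {y ω : 𝕜} {r s : ℝ}
    (hy : y ≠ ω) (hω : ω ≠ 0) (hr : ‖(y - ω)⁻¹‖ ≤ r) (hs : ‖ω⁻¹‖ ≤ s) :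
    ‖1 / (y - ω) ^ 2 - 1 / ω ^ 2‖ ≤ ‖y‖ * (r * s) * (r + s) := by
  have hfactor : 1 / (y - ω) ^ 2 - 1 / ω ^ 2 = y * ((y - ω)⁻¹ * ω⁻¹) * ((y - ω)⁻¹ - ω⁻¹) := by
    have := sub_ne_zero.2 hy
    field_simp
    ring
  have hr0 : 0 ≤ r := (norm_nonneg _).trans hr
  have hs0 : 0 ≤ s := (norm_nonneg _).trans hs
  rw [hfactor, norm_mul, norm_mul, norm_mul]
  gcongr
  exact norm_sub_le_of_le hr hs

lemma exists_summable_norm_wpSummand_two_le (hτ : 0 < τ.im) (hz : ∀ p, z ≠ latticePt τ p) :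
    ∃ b : ℤ × ℤ → ℝ, Summable b ∧
      ∀ᶠ x : ℂ × ℂ in 𝓝 (z, τ), ∀ p, ‖wpSummand 2 x.1 x.2 p‖ ≤ b p := by
  obtain ⟨C, hC, hz_inv⟩ := exists_norm_inv_sub_latticePt_le hτ z
  obtain ⟨D, hD, h0_inv⟩ := exists_norm_inv_sub_latticePt_le hτ 0
  have hproj : Tendsto (fun x : ℂ × ℂ => ((0 : ℂ), x.2)) (𝓝 (z, τ)) (𝓝 (0, τ)) :=
    Continuous.tendsto (by fun_prop) _
  have hnorm : ∀ᶠ x : ℂ × ℂ in 𝓝 (z, τ), ‖x.1‖ ≤ ‖z‖ + 1 :=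
    continuous_fst.norm.continuousAt.eventually_le_const (lt_add_one ‖z‖)
  refine ⟨fun p => ((‖z‖ + 1) * (C * D) * (C + D) + C ^ 2) * (1 + ‖p‖)⁻¹ ^ 3,
    summable_inv_one_add_norm_pow_three.mul_left _, ?_⟩
  filter_upwards [hz_inv, hproj.eventually h0_inv, hnorm] with x hx hω hxz p
  obtain ⟨hxp, hxinv⟩ := hx p (hz p)
  rcases eq_or_ne p 0 with rfl | hp
  · have hsq : ‖wpSummand 2 x.1 x.2 0‖ ≤ C ^ 2 := by
      have := pow_le_pow_left₀ (norm_nonneg _) hxinv 2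
      simpa [wpSummand, latticePt_zero] using this
    simpa using hsq.trans (le_add_of_nonneg_left (by positivity))
  · obtain ⟨hωp, hωinv⟩ := hω p (latticePt_ne_zero hτ hp).symm
    rw [zero_sub, inv_neg, norm_neg] at hωinv
    rw [wpSummand, if_pos rfl]
    calc ‖1 / (x.1 - latticePt x.2 p) ^ 2 - 1 / latticePt x.2 p ^ 2‖
        ≤ ‖x.1‖ * (C * (1 + ‖p‖)⁻¹ * (D * (1 + ‖p‖)⁻¹)) *
            (C * (1 + ‖p‖)⁻¹ + D * (1 + ‖p‖)⁻¹) :=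
          norm_one_div_sub_sq_sub_one_div_sq_le hxp hωp.symm hxinv hωinv
      _ = ‖x.1‖ * (C * D) * (C + D) * (1 + ‖p‖)⁻¹ ^ 3 := by ring
      _ ≤ ((‖z‖ + 1) * (C * D) * (C + D) + C ^ 2) * (1 + ‖p‖)⁻¹ ^ 3 := by
          gcongr
          exact le_add_of_le_of_nonneg (by gcongr) (by positivity)

lemma exists_summable_norm_wpSummand_le (hm : 2 ≤ m) (hτ : 0 < τ.im)
    (hz : ∀ p, z ≠ latticePt τ p) :
    ∃ b : ℤ × ℤ → ℝ, Summable b ∧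
      ∀ᶠ x : ℂ × ℂ in 𝓝 (z, τ), ∀ p, ‖wpSummand m x.1 x.2 p‖ ≤ b p := by
  rcases hm.eq_or_lt with rfl | hm
  · exact exists_summable_norm_wpSummand_two_le hτ hz
  obtain ⟨C, hC, hinv⟩ := exists_norm_inv_sub_latticePt_le hτ z
  refine ⟨fun p => C ^ m * (1 + ‖p‖)⁻¹ ^ 3, summable_inv_one_add_norm_pow_three.mul_left _, ?_⟩
  filter_upwards [hinv] with x hx p
  rw [wpSummand, if_neg hm.ne', sub_zero, one_div, ← inv_pow, norm_pow]
  calc ‖(x.1 - latticePt x.2 p)⁻¹‖ ^ m ≤ (C * (1 + ‖p‖)⁻¹) ^ m := by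
        gcongr
        exact (hx p (hz p)).2
    _ = C ^ m * (1 + ‖p‖)⁻¹ ^ m := mul_pow _ _ _
    _ ≤ C ^ m * (1 + ‖p‖)⁻¹ ^ 3 := by
        gcongr ?_ * ?_
        exact pow_le_pow_of_le_one (by positivity)
          (inv_le_one_of_one_le₀ (le_add_of_nonneg_right (norm_nonneg p))) hm

lemma differentiableAt_wpSummand {y : ℂ → ℂ} {p : ℤ × ℤ} (hτ : 0 < τ.im)
    (hy : DifferentiableAt ℂ y τ) (hp : y τ ≠ latticePt τ p) :
    DifferentiableAt ℂ (fun s => wpSummand m (y s) s p) τ := by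
  have hω : DifferentiableAt ℂ (fun s => latticePt s p) τ :=
    (hasDerivAt_latticePt τ p).differentiableAt
  have hmain : DifferentiableAt ℂ (fun s => 1 / (y s - latticePt s p) ^ m) τ :=
    (differentiableAt_const 1).fun_div ((hy.fun_sub hω).fun_pow m)
      (pow_ne_zero m (sub_ne_zero.2 hp))
  refine hmain.fun_sub ?_
  split_ifs
  · rcases eq_or_ne p 0 with rfl | hp0
    · simp [latticePt_zero]
    · exact (differentiableAt_const 1).fun_div (hω.fun_pow 2)
        (pow_ne_zero 2 (latticePt_ne_zero hτ hp0))
  · exact differentiableAt_const 0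

lemma hasSum_deriv_wp_comp {y : ℂ → ℂ} (hm : 2 ≤ m) (hτ : 0 < τ.im)
    (hy : ∀ᶠ s in 𝓝 τ, DifferentiableAt ℂ y s) (hyτ : ∀ p, y τ ≠ latticePt τ p) :
    HasSum (fun p => deriv (fun s => wpSummand m (y s) s p) τ)
      (deriv (fun s => wp m (y s) s) τ) := by
  obtain ⟨b, hb, hbound⟩ := exists_summable_norm_wpSummand_le hm hτ hyτ
  obtain ⟨C, -, hinv⟩ := exists_norm_inv_sub_latticePt_le hτ (y τ)
  have hcurve : Tendsto (fun s => (y s, s)) (𝓝 τ) (𝓝 (y τ, τ)) :=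
    hy.self_of_nhds.continuousAt.prodMk_nhds tendsto_id
  have him : ∀ᶠ s : ℂ in 𝓝 τ, 0 < s.im :=
    continuous_im.continuousAt.eventually_const_lt hτ
  obtain ⟨ε, hε, hball⟩ := Metric.eventually_nhds_iff_ball.1
    ((hcurve.eventually (hbound.and hinv)).and (him.and hy))
  have htermwise := hasSum_deriv_of_summable_norm hb
    (F := fun p s => wpSummand m (y s) s p)
    (fun p s hs => by
      obtain ⟨⟨-, hoff⟩, hims, hys⟩ := hball s hs
      exact (differentiableAt_wpSummand hims hys (hoff p (hyτ p)).1).differentiableWithinAt)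
    Metric.isOpen_ball (fun p s hs => (hball s hs).1.1 p) (Metric.mem_ball_self hε)
  have heq : (fun s => wp m (y s) s) =ᶠ[𝓝 τ] fun s => ∑' p, wpSummand m (y s) s p := by
    filter_upwards [him] with s hs using wp_eq_tsum_wpSummand hm hs _
  rwa [heq.deriv_eq]

lemma deriv_wpSummand_sub_comp {y : ℂ → ℂ} {p : ℤ × ℤ} (hτ : 0 < τ.im)
    (hy : DifferentiableAt ℂ y τ) (hp : y τ ≠ latticePt τ p) :
    deriv (fun s => wpSummand m (y τ) s p) τ - deriv (fun s => wpSummand m (y s) s p) τ =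
      m * deriv y τ * (1 / (y τ - latticePt τ p) ^ (m + 1)) := by
  have hpow : ∀ {f : ℂ → ℂ} {f' : ℂ}, HasDerivAt f f' τ → f τ = y τ →
      HasDerivAt (fun s => 1 / (f s - latticePt s p) ^ m)
        (-(m * (f' - p.1)) * (1 / (y τ - latticePt τ p) ^ (m + 1))) τ := fun hf hfτ =>
    hfτ ▸ hasDerivAt_one_div_pow (hf.fun_sub (hasDerivAt_latticePt τ p))
      (sub_ne_zero.2 (hfτ ▸ hp)) m
  rw [← deriv_fun_sub (differentiableAt_wpSummand hτ (differentiableAt_const _) hp)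
    (differentiableAt_wpSummand hτ hy hp)]
  simp only [wpSummand, sub_sub_sub_cancel_right]
  rw [((hpow (hasDerivAt_const τ (y τ)) rfl).fun_sub (hpow hy.hasDerivAt rfl)).deriv]
  ring

lemma deriv_wp_comp {y : ℂ → ℂ} (hm : 2 ≤ m) (hτ : 0 < τ.im)
    (hy : ∀ᶠ s in 𝓝 τ, DifferentiableAt ℂ y s) (hyτ : ∀ p, y τ ≠ latticePt τ p) :
    deriv (fun s => wp m (y s) s) τ =
      deriv (fun s => wp m (y τ) s) τ - m * deriv y τ * wp (m + 1) (y τ) τ := by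
  have hmoving := hasSum_deriv_wp_comp hm hτ hy hyτ
  have hfixed := hasSum_deriv_wp_comp (y := fun _ => y τ) hm hτ
    (.of_forall fun _ => differentiableAt_const _) hyτ
  have hwp : wp (m + 1) (y τ) τ = ∑' p, 1 / (y τ - latticePt τ p) ^ (m + 1) := by
    rw [wp, if_neg (by omega), if_neg (by omega), wpHigh]
  have hdiff := (hfixed.sub hmoving).tsum_eq
  simp only [deriv_wpSummand_sub_comp hτ hy.self_of_nhds (hyτ _), tsum_mul_left, ← hwp] at hdiff
  rw [hdiff, sub_sub_cancel]

lemma deriv_wp_add_latticePt (hm : 2 ≤ m) (hτ : 0 < τ.im)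
    (hz : ∀ p, z ≠ latticePt τ p) (q : ℤ × ℤ) :
    deriv (fun s => wp m (z + latticePt τ q) s) τ =
      deriv (fun s => wp m z s) τ + m * q.1 * wp (m + 1) z τ := by
  have hy : ∀ s, HasDerivAt (fun s => z + latticePt s q) q.1 s := fun s =>
    (hasDerivAt_latticePt s q).const_add z
  have hchain := deriv_wp_comp hm hτ (.of_forall fun s => (hy s).differentiableAt)
    (add_latticePt_ne_latticePt hz q)
  have hper : (fun s => wp m (z + latticePt s q) s) =ᶠ[𝓝 τ] fun s => wp m z s := by
    filter_upwards [continuous_im.continuousAt.eventually_const_lt hτ] with s hs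
      using wp_add_latticePt hm hs z q
  rw [hper.deriv_eq, (hy τ).deriv, wp_add_latticePt (by omega) hτ] at hchain
  rw [hchain, sub_add_cancel]

end Weierstrass

section Cotangent

lemma cot_pi_mul_add_intCast (x : ℂ) (n : ℤ) :
    Complex.cot (π * (x + n)) = Complex.cot (π * x) := by
  rw [mul_add, mul_comm (π : ℂ) n, ← Complex.tan_inv_eq_cot, Complex.tan_add_int_mul_pi,
    Complex.tan_inv_eq_cot]

lemma tendsto_cot_of_tendsto_im_atTop {α : Type*} {l : Filter α} {f : α → ℂ}
    (hf : Tendsto (fun a => (f a).im) l atTop) :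
    Tendsto (fun a => Complex.cot (f a)) l (𝓝 (-I)) := by
  have hexp : Tendsto (fun a => Complex.exp (2 * I * f a)) l (𝓝 0) := by
    refine Complex.tendsto_exp_nhds_zero_iff.2 ?_
    simpa using hf.const_mul_atTop_of_neg (show (-2 : ℝ) < 0 by norm_num)
  simp only [Complex.cot_eq_exp_ratio]
  simpa [Pi.div_def] using (hexp.add_const 1).div ((hexp.const_sub 1).const_mul I) (by simp)

lemma tendsto_cot_of_tendsto_im_atBot {α : Type*} {l : Filter α} {f : α → ℂ}
    (hf : Tendsto (fun a => (f a).im) l atBot) :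
    Tendsto (fun a => Complex.cot (f a)) l (𝓝 I) := by
  have hneg : Tendsto (fun a => (-f a).im) l atTop := by
    simpa only [neg_im] using tendsto_neg_atTop_iff.2 hf
  simpa [Complex.cot_eq_cos_div_sin, div_neg] using (tendsto_cot_of_tendsto_im_atTop hneg).neg

lemma tendsto_sum_Icc_one_div_sub {x : ℂ} (hx : x ∈ integerComplement) :
    Tendsto (fun N : ℕ => ∑ l ∈ Finset.Icc (-(N : ℤ)) N, 1 / (x - l)) atTop
      (𝓝 (π * Complex.cot (π * x))) := by
  have h := (tendsto_logDeriv_euler_cot_sub hx).add_const (1 / x)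
  rw [sub_add_cancel] at h
  refine h.congr fun N => ?_
  induction N with
  | zero => simp
  | succ N ih =>
    rw [Finset.sum_range_succ, add_right_comm, ih, Nat.cast_add_one,
      Finset.sum_Icc_succ_eq_add_endpoints]
    simp only [cotTerm]
    push_cast
    ring

lemma hasSum_one_div_sub_sub_one_div_sub {x y : ℂ} (hx : x ∈ integerComplement)
    (hy : y ∈ integerComplement) :
    HasSum (fun l : ℤ => 1 / (x - l) - 1 / (y - l))
      (π * Complex.cot (π * x) - π * Complex.cot (π * y)) := by
  have hne : ∀ {w : ℂ}, w ∈ integerComplement → ∀ l : ℤ, w - l ≠ 0 := fun hw l => by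
    simpa [sub_eq_add_neg] using integerComplement_add_ne_zero hw (-l)
  have hbigO : ∀ w : ℂ, (fun l : ℤ => (w - l)⁻¹) =O[cofinite] fun l => (l : ℝ)⁻¹ := fun w => by
    simpa using! (EisensteinSeries.linear_inv_isBigO_right 1 w).comp_neg_int
  have hsummable : Summable fun l : ℤ => ((x - l) * (y - l))⁻¹ := by
    apply EisensteinSeries.summable_inv_of_isBigO_rpow_inv (a := 2) (by norm_num)
    simpa [pow_two] using! (hbigO y).mul (hbigO x)
  have hdiff : Summable fun l : ℤ => 1 / (x - l) - 1 / (y - l) :=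
    (hsummable.mul_left (y - x)).congr fun l => by
      have := hne hx l
      have := hne hy l
      field_simp
      ring
  have hlim := (tendsto_sum_Icc_one_div_sub hx).sub (tendsto_sum_Icc_one_div_sub hy)
  simp only [← Finset.sum_sub_distrib] at hlim
  rw [← tendsto_nhds_unique (hdiff.hasSum.comp (Finset.tendsto_Icc_neg (R := ℤ))) hlim]
  exact hdiff.hasSum

end Cotangent

lemma tendsto_sum_Ico_sub_shift {E : Type*} [AddCommGroup E] [TopologicalSpace E]
    [IsTopologicalAddGroup E] {g : ℤ → E} {a b : E} (ha : Tendsto g atTop (𝓝 a))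
    (hb : Tendsto g atBot (𝓝 b)) (n : ℤ) :
    Tendsto (fun N : ℕ => ∑ k ∈ Finset.Ico (-(N : ℤ)) N, (g (k - n) - g k)) atTop
      (𝓝 (n • (b - a))) := by
  have hstep : ∀ n : ℤ, Tendsto (fun N : ℕ => ∑ k ∈ Finset.Ico (-(N : ℤ)) N,
      (g (k - (n + 1)) - g (k - n))) atTop (𝓝 (b - a)) := fun n => by
    have hbot : Tendsto (fun N : ℕ => g (-N - (n + 1))) atTop (𝓝 b) :=
      hb.comp <| tendsto_atBot_add_const_right _ _ <|
        tendsto_neg_atTop_atBot.comp tendsto_natCast_atTop_atTop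
    have htop : Tendsto (fun N : ℕ => g (N - (n + 1))) atTop (𝓝 a) :=
      ha.comp <| tendsto_atTop_add_const_right _ _ tendsto_natCast_atTop_atTop
    refine (hbot.sub htop).congr fun N => ?_
    simpa using (Finset.sum_Ico_int_sub N fun k => g (k - (n + 1))).symm
  induction n using Int.induction_on with
  | zero => simpa using tendsto_const_nhds
  | succ n ih =>
    have h := (hstep n).add ih
    simpa [← Finset.sum_add_distrib, add_smul, add_comm] using h
  | pred n ih =>
    have h := ih.sub (hstep (-n - 1))
    simpa [← Finset.sum_sub_distrib, sub_smul] using h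

section QuasiPeriod

variable {τ z : ℂ}

lemma norm_one_div_sub_add_one_div_add_div_sq_le {𝕜 : Type*} [NormedField 𝕜] {y ω : 𝕜} {r s : ℝ}
    (hy : y ≠ ω) (hω : ω ≠ 0) (hr : ‖(y - ω)⁻¹‖ ≤ r) (hs : ‖ω⁻¹‖ ≤ s) :
    ‖1 / (y - ω) + 1 / ω + y / ω ^ 2‖ ≤ ‖y‖ ^ 2 * r * s ^ 2 := by
  have hfactor : 1 / (y - ω) + 1 / ω + y / ω ^ 2 = y ^ 2 * (y - ω)⁻¹ * ω⁻¹ ^ 2 := by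
    have := sub_ne_zero.2 hy
    field_simp
    ring
  have hr0 : 0 ≤ r := (norm_nonneg _).trans hr
  rw [hfactor, norm_mul, norm_mul, norm_pow, norm_pow]
  gcongr

lemma summable_wp1 (hτ : 0 < τ.im) (hz : ∀ p, z ≠ latticePt τ p) :
    Summable fun p : ℤ × ℤ =>
      1 / (z - latticePt τ p) + 1 / latticePt τ p + z / latticePt τ p ^ 2 := by
  obtain ⟨C, -, hz_inv⟩ := exists_norm_inv_sub_latticePt_le hτ z
  obtain ⟨D, -, h0_inv⟩ := exists_norm_inv_sub_latticePt_le hτ 0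
  refine Summable.of_norm_bounded_eventually
    (summable_inv_one_add_norm_pow_three.mul_left (‖z‖ ^ 2 * C * D ^ 2)) ?_
  filter_upwards [(Set.finite_singleton (0 : ℤ × ℤ)).compl_mem_cofinite] with p hp
  have hω : latticePt τ p ≠ 0 := latticePt_ne_zero hτ hp
  have hωinv := (h0_inv.self_of_nhds p hω.symm).2
  rw [zero_sub, inv_neg, norm_neg] at hωinv
  calc ‖1 / (z - latticePt τ p) + 1 / latticePt τ p + z / latticePt τ p ^ 2‖
      ≤ ‖z‖ ^ 2 * (C * (1 + ‖p‖)⁻¹) * (D * (1 + ‖p‖)⁻¹) ^ 2 :=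
        norm_one_div_sub_add_one_div_add_div_sq_le (hz p) hω (hz_inv.self_of_nhds p (hz p)).2 hωinv
    _ = ‖z‖ ^ 2 * C * D ^ 2 * (1 + ‖p‖)⁻¹ ^ 3 := by ring

lemma hasSum_wp1 (hτ : 0 < τ.im) (hz : ∀ p, z ≠ latticePt τ p) :
    HasSum (fun p : ℤ × ℤ =>
      1 / (z - latticePt τ p) + 1 / latticePt τ p + z / latticePt τ p ^ 2) (wp1 z τ) := by
  have h := summable_wp1 hτ hz
  convert h.hasSum
  rw [← add_tsum_subtype_ne h (0, 0), wp1]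
  simp [latticePt]

lemma hasSum_e2Summand (hτ : 0 < τ.im) (k : ℤ) :
    HasSum (fun l : ℤ => 1 / ((k : ℂ) * τ + l) ^ 2) (EisensteinSeries.e2Summand k ⟨τ, hτ⟩) := by
  simpa [EisensteinSeries.e2Summand, EisensteinSeries.eisSummand, zpow_neg]
    using (EisensteinSeries.e2Summand_summable k ⟨τ, hτ⟩).hasSum

lemma G2_eq_tsum_e2Summand (hτ : 0 < τ.im)
    (h : Summable fun k => EisensteinSeries.e2Summand k ⟨τ, hτ⟩) :
    G2 τ = ∑' k, EisensteinSeries.e2Summand k ⟨τ, hτ⟩ := by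
  rw [← add_tsum_subtype_ne h 0, EisensteinSeries.e2Summand_zero_eq_two_riemannZeta_two,
    riemannZeta_two, G2]
  simp only [(hasSum_e2Summand hτ _).tsum_eq]
  ring

lemma sub_intCast_mul_mem_integerComplement (hz : ∀ p, z ≠ latticePt τ p) (k : ℤ) :
    z - k * τ ∈ integerComplement := by
  rintro ⟨l, hl⟩
  exact hz (k, l) (by rw [latticePt, hl, add_sub_cancel])

lemma hasSum_wp1_add_sub_wp1 {c : ℂ} (hτ : 0 < τ.im) (hz : ∀ p, z ≠ latticePt τ p)
    (hzc : ∀ p, z + c ≠ latticePt τ p) :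
    HasSum (fun k : ℤ => π * Complex.cot (π * (z + c - k * τ)) -
      π * Complex.cot (π * (z - k * τ)) + c * EisensteinSeries.e2Summand k ⟨τ, hτ⟩)
      (wp1 (z + c) τ - wp1 z τ) := by
  refine ((hasSum_wp1 hτ hzc).sub (hasSum_wp1 hτ hz)).prod_fiberwise fun k => ?_
  refine ((hasSum_one_div_sub_sub_one_div_sub (sub_intCast_mul_mem_integerComplement hzc k)
    (sub_intCast_mul_mem_integerComplement hz k)).add
      ((hasSum_e2Summand hτ k).mul_left c)).congr_fun fun l => ?_
  simp only [latticePt, sub_sub]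
  ring

lemma one_half_ne_latticePt (hτ : 0 < τ.im) (p : ℤ × ℤ) : 1 / 2 ≠ latticePt τ p := fun h => by
  refine latticePt_ne_zero hτ (p := p + p + (0, -1)) (fun hp => ?_) ?_
  · have hodd := congrArg Prod.snd hp
    simp only [Prod.snd_add, Prod.snd_zero] at hodd
    omega
  · rw [latticePt_add, latticePt_add, ← h]
    norm_num [latticePt]

lemma hasSum_e2Summand_G2 (hτ : 0 < τ.im) :
    HasSum (fun k => EisensteinSeries.e2Summand k ⟨τ, hτ⟩) (G2 τ) := by
  have hhalf := one_half_ne_latticePt hτ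
  have hhalf_add : ∀ p, 1 / 2 + 1 ≠ latticePt τ p := by
    simpa [latticePt] using add_latticePt_ne_latticePt hhalf (0, 1)
  have hcot : ∀ k : ℤ, Complex.cot (π * (1 / 2 + 1 - k * τ)) =
      Complex.cot (π * (1 / 2 - k * τ)) := fun k => by
    rw [add_sub_right_comm]
    exact_mod_cast cot_pi_mul_add_intCast (1 / 2 - k * τ) 1
  have h := (hasSum_wp1_add_sub_wp1 hτ hhalf hhalf_add).summable
  simp only [hcot, sub_self, zero_add, one_mul] at h
  exact G2_eq_tsum_e2Summand hτ h ▸ h.hasSum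

lemma im_pi_mul_sub_intCast_mul (τ z : ℂ) (k : ℤ) :
    (π * (z - k * τ)).im = π * z.im + k * -(π * τ.im) := by
  rw [im_ofReal_mul, sub_im, ← ofReal_intCast, im_ofReal_mul]
  ring

lemma tendsto_cot_sub_intCast_mul_atTop (hτ : 0 < τ.im) (z : ℂ) :
    Tendsto (fun k : ℤ => π * Complex.cot (π * (z - k * τ))) atTop (𝓝 (π * I)) := by
  refine (tendsto_cot_of_tendsto_im_atBot ?_).const_mul _
  simp only [im_pi_mul_sub_intCast_mul]
  exact tendsto_atBot_add_const_left _ _ <|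
    tendsto_intCast_atTop_atTop.atTop_mul_const_of_neg (neg_lt_zero.2 (by positivity))

lemma tendsto_cot_sub_intCast_mul_atBot (hτ : 0 < τ.im) (z : ℂ) :
    Tendsto (fun k : ℤ => π * Complex.cot (π * (z - k * τ))) atBot (𝓝 (π * -I)) := by
  refine (tendsto_cot_of_tendsto_im_atTop ?_).const_mul _
  simp only [im_pi_mul_sub_intCast_mul]
  exact tendsto_atTop_add_const_left _ _ <|
    (tendsto_intCast_atBot_iff.2 tendsto_id).atBot_mul_const_of_neg (neg_lt_zero.2 (by positivity))

lemma wp1_add_latticePt (hτ : 0 < τ.im) (hz : ∀ p, z ≠ latticePt τ p) (q : ℤ × ℤ) :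
    wp1 (z + latticePt τ q) τ = wp1 z τ + latticePt τ q * G2 τ - 2 * π * I * q.1 := by
  have hcot := (hasSum_wp1_add_sub_wp1 hτ hz (add_latticePt_ne_latticePt hz q)).sub
    ((hasSum_e2Summand_G2 hτ).mul_left (latticePt τ q))
  have hshift : ∀ k : ℤ, Complex.cot (π * (z + latticePt τ q - k * τ)) =
      Complex.cot (π * (z - (k - q.1 : ℤ) * τ)) := fun k => by
    rw [← cot_pi_mul_add_intCast (z - (k - q.1 : ℤ) * τ) q.2]
    congr 2
    simp only [latticePt]
    push_cast
    ring
  simp only [add_sub_cancel_right, hshift] at hcot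
  have heq := tendsto_nhds_unique (hcot.comp (Finset.tendsto_Ico_neg (R := ℤ)))
    (tendsto_sum_Ico_sub_shift (tendsto_cot_sub_intCast_mul_atTop hτ z)
      (tendsto_cot_sub_intCast_mul_atBot hτ z) q.1)
  rw [zsmul_eq_mul] at heq
  linear_combination heq

end QuasiPeriod

section Ellipticity

variable {m : ℕ} {τ u v w : ℂ}

lemma phiTheta_add_left (hm : 2 ≤ m) (hτ : 0 < τ.im) (huv : ∀ p, u - v ≠ latticePt τ p)
    (huw : ∀ p, u - w ≠ latticePt τ p) (q : ℤ × ℤ) :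
    phiTheta m (u + latticePt τ q) v w τ = phiTheta m u v w τ := by
  rw [phiTheta, phiTheta, add_sub_right_comm u _ v, add_sub_right_comm u _ w,
    deriv_wp_add_latticePt hm hτ huv, wp_add_latticePt hm hτ, wp_add_latticePt (by omega) hτ,
    wp1_add_latticePt hτ huw]
  ring

lemma phiTheta_add_middle (hm : 2 ≤ m) (hτ : 0 < τ.im) (huv : ∀ p, u - v ≠ latticePt τ p)
    (hvw : ∀ p, v - w ≠ latticePt τ p) (q : ℤ × ℤ) :
    phiTheta m u (v + latticePt τ q) w τ = phiTheta m u v w τ := by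
  rw [phiTheta, phiTheta, ← sub_sub, sub_eq_add_neg (u - v), ← latticePt_neg,
    add_sub_right_comm v _ w, deriv_wp_add_latticePt hm hτ huv, wp_add_latticePt hm hτ,
    wp_add_latticePt (by omega) hτ, wp1_add_latticePt hτ hvw, latticePt_neg, Prod.fst_neg]
  push_cast
  ring

lemma phiTheta_add_right (hτ : 0 < τ.im) (huw : ∀ p, u - w ≠ latticePt τ p)
    (hvw : ∀ p, v - w ≠ latticePt τ p) (q : ℤ × ℤ) :
    phiTheta m u v (w + latticePt τ q) τ = phiTheta m u v w τ := by
  simp only [phiTheta, ← sub_sub, sub_eq_add_neg _ (latticePt τ q), ← latticePt_neg,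
    wp1_add_latticePt hτ huw, wp1_add_latticePt hτ hvw]
  ring

end Ellipticity

/-- `φ` is elliptic in each of the variables `u`, `v`, `w`: shifting any one of
them by a lattice point `kτ + l` (whenever the shifted arguments still satisfy
the lattice conditions) leaves `φ` unchanged. -/
theorem phiTheta_elliptic (m : ℕ) (hm : 2 ≤ m) (τ u v w : ℂ) (hτ : 0 < τ.im)
    (huv : ∀ p : ℤ × ℤ, u - v ≠ latticePt τ p)
    (huw : ∀ p : ℤ × ℤ, u - w ≠ latticePt τ p)
    (hvw : ∀ p : ℤ × ℤ, v - w ≠ latticePt τ p) :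
    (∀ k l : ℤ,
      (∀ p : ℤ × ℤ, (u + ((k : ℂ) * τ + l)) - v ≠ latticePt τ p) →
      (∀ p : ℤ × ℤ, (u + ((k : ℂ) * τ + l)) - w ≠ latticePt τ p) →
      phiTheta m (u + ((k : ℂ) * τ + l)) v w τ = phiTheta m u v w τ) ∧
    (∀ k l : ℤ,
      (∀ p : ℤ × ℤ, u - (v + ((k : ℂ) * τ + l)) ≠ latticePt τ p) →
      (∀ p : ℤ × ℤ, (v + ((k : ℂ) * τ + l)) - w ≠ latticePt τ p) →
      phiTheta m u (v + ((k : ℂ) * τ + l)) w τ = phiTheta m u v w τ) ∧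
    (∀ k l : ℤ,
      (∀ p : ℤ × ℤ, u - (w + ((k : ℂ) * τ + l)) ≠ latticePt τ p) →
      (∀ p : ℤ × ℤ, v - (w + ((k : ℂ) * τ + l)) ≠ latticePt τ p) →
      phiTheta m u v (w + ((k : ℂ) * τ + l)) τ = phiTheta m u v w τ) := by
  exact ⟨fun k l _ _ => phiTheta_add_left hm hτ huv huw (k, l),
    fun k l _ _ => phiTheta_add_middle hm hτ huv hvw (k, l),
    fun k l _ _ => phiTheta_add_right hτ huw hvw (k, l)⟩
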